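/- Let q be continuous on [-M,M] and suppose every solution of the Dirichlet eigenvalue problem ψ'' - qψ = λψ, ψ(±M)=0 has λ < 0 (negative Dirichlet spectrum). Let φ₀, ψ₀ be nonzero solutions of ψ'' = qψ with φ₀(-M) = 0, ψ₀(M) = 0. Then φ₀ and ψ₀ have no zeros in the open interval, are linearly independent, and the unique solution of ψ'' = qψ with ψ(-M) = ψ(M) = 1 is strictly positive on [-M,M]. -/

import Mathlib

/-!
Write a solution of `u'' = c u` in Prüfer coordinates, `u = r sin θ` and `u' = r cos θ`. Then
`θ' = cos² θ - c sin² θ`, an equation for `θ` alone whose right-hand side is bounded and globally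
Lipschitz in `θ`, and `r` never vanishes. If `u` vanishes at the left endpoint `a`, normalise
`θ a = 0`; since `θ' = 1` wherever `sin θ = 0`, the angle can never come back down through a
multiple of `π`, so `u` has a zero in `(a, b]` only if `θ b ≥ π`.

For the potentials `c = q + l`, the value `θ b` depends continuously on `l` and is at most `π / 2`
once `q + l > 0`. If it were at least `π` at `l = 0`, it would equal `π` for some `l ≥ 0`, and that
`l` would be a nonnegative Dirichlet eigenvalue. Hence `u` has no zero in `(a, b]`; reflection
treats solutions vanishing at `b`, and the solution with positive boundary values is a positive
combination of the two.
-/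

open Set Filter Topology
open scoped NNReal

section Calculus

variable {E : Type*} [NormedAddCommGroup E] [NormedSpace ℝ E] {a b : ℝ}

theorem exists_hasDerivAt_eqOn_Icc [CompleteSpace E] {u g : ℝ → E} (hg : Continuous g)
    (hu : ∀ x ∈ Icc a b, HasDerivWithinAt u (g x) (Icc a b) x) :
    ∃ f : ℝ → E, (∀ x, HasDerivAt f (g x) x) ∧ EqOn f u (Icc a b) := by
  have hf : ∀ x, HasDerivAt (fun x => u a + ∫ t in a..x, g t) (g x) x := fun x =>
    (hg.integral_hasStrictDerivAt a x).hasDerivAt.const_add (u a)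
  refine ⟨_, hf, eq_of_derivWithin_eq
    (fun x _ => (hf x).differentiableAt.differentiableWithinAt)
    (fun x hx => (hu x hx).differentiableWithinAt) (fun x hx => ?_) (by simp)⟩
  have hunique := uniqueDiffOn_Icc (hx.1.trans_lt hx.2) x (Ico_subset_Icc_self hx)
  rw [(hf x).hasDerivWithinAt.derivWithin hunique,
    (hu x (Ico_subset_Icc_self hx)).derivWithin hunique]

theorem exists_contDiff_two_eqOn_Icc [CompleteSpace E] {u v w : ℝ → E} (hab : a ≤ b)
    (hu : ∀ x ∈ Icc a b, HasDerivWithinAt u (v x) (Icc a b) x)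
    (hv : ∀ x ∈ Icc a b, HasDerivWithinAt v (w x) (Icc a b) x)
    (hw : ContinuousOn w (Icc a b)) :
    ∃ f : ℝ → E, ContDiff ℝ 2 f ∧ EqOn f u (Icc a b) ∧ EqOn (deriv f) v (Icc a b) ∧
      EqOn (deriv (deriv f)) w (Icc a b) := by
  set W : ℝ → E := IccExtend hab ((Icc a b).domRestrict w)
  have hWw : EqOn W w (Icc a b) := fun x hx => IccExtend_of_mem hab _ hx
  have hW : Continuous W := hw.domRestrict.Icc_extend'
  obtain ⟨V, hVW, hVv⟩ := exists_hasDerivAt_eqOn_Icc hW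
    fun x hx => (hv x hx).congr_deriv (hWw hx).symm
  have hV : Continuous V := continuous_iff_continuousAt.2 fun x => (hVW x).continuousAt
  obtain ⟨f, hfV, hfu⟩ := exists_hasDerivAt_eqOn_Icc hV
    fun x hx => (hu x hx).congr_deriv (hVv hx).symm
  have hdf : deriv f = V := funext fun x => (hfV x).deriv
  have hdV : deriv V = W := funext fun x => (hVW x).deriv
  refine ⟨f, ?_, hfu, by rwa [hdf], by rwa [hdf, hdV]⟩
  rw [← one_add_one_eq_two, contDiff_succ_iff_deriv, hdf, contDiff_one_iff_deriv, hdV]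
  exact ⟨fun x => (hfV x).differentiableAt, by simp, fun x => (hVW x).differentiableAt, hW⟩

theorem exists_isIntegralCurveOn_Icc_of_bounded [CompleteSpace E] {v : ℝ → E → E} {K L : ℝ≥0}
    (hab : a ≤ b)
    (hlip : ∀ t ∈ Icc a b, LipschitzWith K (v t))
    (hcont : ∀ x, ContinuousOn (fun t => v t x) (Icc a b))
    (hbound : ∀ t ∈ Icc a b, ∀ x, ‖v t x‖ ≤ L) (x₀ : E) :
    ∃ γ : ℝ → E, γ a = x₀ ∧ IsIntegralCurveOn γ v (Icc a b) := by
  have hP : IsPicardLindelof v (⟨a, left_mem_Icc.2 hab⟩ : Icc a b) x₀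
      (L * (b - a).toNNReal) 0 L K :=
    { lipschitzOnWith := fun t ht => (hlip t ht).lipschitzOnWith
      continuousOn := fun x _ => hcont x
      norm_le := fun t ht x _ => hbound t ht x
      mul_max_le := by simp [hab] }
  exact hP.exists_eq_forall_mem_Icc_hasDerivWithinAt₀

theorem hasDerivWithinAt_Ici_of_isIntegralCurveOn_Icc {v : ℝ → E → E} {γ : ℝ → E}
    (hγ : IsIntegralCurveOn γ v (Icc a b)) {t : ℝ} (ht : t ∈ Ico a b) :
    HasDerivWithinAt γ (v t (γ t)) (Ici t) t :=
  (hγ t (Ico_subset_Icc_self ht)).mono_of_mem_nhdsWithin (Icc_mem_nhdsGE_of_mem ht)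

theorem div_pos_of_isPreconnected_of_forall_ne_zero {X : Type*} [TopologicalSpace X] {s : Set X}
    {f : X → ℝ} (hs : IsPreconnected s) (hf : ContinuousOn f s) (hne : ∀ x ∈ s, f x ≠ 0)
    {x y : X} (hx : x ∈ s) (hy : y ∈ s) : 0 < f x / f y := by
  by_contra! hle
  obtain ⟨z, hz, hz0⟩ := hs.intermediate_value hx hy (hf.div_const (f y))
    (show (0 : ℝ) ∈ Icc _ _ from ⟨hle, by simp [hne y hy]⟩)
  exact div_ne_zero (hne z hz) (hne y hy) hz0

end Calculus

/-- The function `u` is a solution of the Schrödinger equation `u'' = c u` on `s`. As in the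
Dirichlet problem below, `u` is `C²` on the whole line, so that `deriv` is meaningful at boundary
points of `s`, while the equation itself is only required on `s`. -/
structure IsSchrodingerSolOn (c u : ℝ → ℝ) (s : Set ℝ) : Prop where
  contDiff : ContDiff ℝ 2 u
  deriv_deriv : ∀ x ∈ s, deriv (deriv u) x = c x * u x

/-- Every Dirichlet eigenvalue of `D² - q` on `[a, b]` is negative. The eigenvalue equation
`ψ'' - q ψ = lam ψ` is encoded as the Schrödinger equation with potential `q + lam`. -/
def HasNegDirichletSpectrum (q : ℝ → ℝ) (a b : ℝ) : Prop :=
  ∀ (lam : ℝ) (ψ : ℝ → ℝ), IsSchrodingerSolOn (fun x => q x + lam) ψ (Icc a b) →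
    ψ a = 0 → ψ b = 0 → (∃ x ∈ Icc a b, ψ x ≠ 0) → lam < 0

namespace IsSchrodingerSolOn

variable {c u v : ℝ → ℝ} {s : Set ℝ} {a b : ℝ}

theorem hasDerivAt (hu : IsSchrodingerSolOn c u s) (x : ℝ) : HasDerivAt u (deriv u x) x :=
  (hu.contDiff.differentiable two_ne_zero x).hasDerivAt

theorem hasDerivAt_deriv (hu : IsSchrodingerSolOn c u s) {x : ℝ} (hx : x ∈ s) :
    HasDerivAt (deriv u) (c x * u x) x :=
  hu.deriv_deriv x hx ▸ (hu.contDiff.differentiable_deriv_two x).hasDerivAt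

theorem const_mul (hu : IsSchrodingerSolOn c u s) (α : ℝ) :
    IsSchrodingerSolOn c (fun x => α * u x) s where
  contDiff := contDiff_const.mul hu.contDiff
  deriv_deriv x hx := by
    have hderiv : deriv (fun x => α * u x) = fun x => α * deriv u x :=
      funext fun y => ((hu.hasDerivAt y).const_mul α).deriv
    rw [hderiv, ((hu.hasDerivAt_deriv hx).const_mul α).deriv]
    ring

theorem sub (hu : IsSchrodingerSolOn c u s) (hv : IsSchrodingerSolOn c v s) :
    IsSchrodingerSolOn c (fun x => u x - v x) s where
  contDiff := hu.contDiff.sub hv.contDiff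
  deriv_deriv x hx := by
    have hderiv : deriv (fun x => u x - v x) = fun x => deriv u x - deriv v x :=
      funext fun y => ((hu.hasDerivAt y).sub (hv.hasDerivAt y)).deriv
    rw [hderiv, ((hu.hasDerivAt_deriv hx).fun_sub (hv.hasDerivAt_deriv hx)).deriv]
    ring

theorem comp_neg (hu : IsSchrodingerSolOn c u (Icc a b)) :
    IsSchrodingerSolOn (fun x => c (-x)) (fun x => u (-x)) (Icc (-b) (-a)) where
  contDiff := hu.contDiff.comp contDiff_neg
  deriv_deriv x hx := by
    have hderiv : deriv (fun x => u (-x)) = fun x => -deriv u (-x) :=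
      funext fun y => deriv_comp_neg u y
    rw [hderiv, deriv.fun_neg, deriv_comp_neg (deriv u), neg_neg]
    exact hu.deriv_deriv (-x) ⟨le_neg_of_le_neg hx.2, neg_le_of_neg_le hx.1⟩

theorem eq_zero_of_initial_eq_zero (hu : IsSchrodingerSolOn c u (Icc a b))
    (hc : ContinuousOn c (Icc a b)) (hua : u a = 0) (hdua : deriv u a = 0) :
    ∀ x ∈ Icc a b, u x = 0 := by
  obtain ⟨C, hC⟩ := isCompact_Icc.exists_bound_of_continuousOn hc
  have hpair : ∀ x ∈ Icc a b,
      HasDerivAt (fun x => (u x, deriv u x)) (deriv u x, c x * u x) x := fun x hx =>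
    (hu.hasDerivAt x).prodMk (hu.hasDerivAt_deriv hx)
  have hbound : ∀ x ∈ Icc a b,
      ‖(deriv u x, c x * u x)‖ ≤ max 1 C * ‖(u x, deriv u x)‖ := fun x hx => by
    refine max_le ?_ ?_
    · exact (norm_snd_le (u x, deriv u x)).trans
        (le_mul_of_one_le_left (norm_nonneg _) (le_max_left _ _))
    · rw [norm_mul]
      exact mul_le_mul ((hC x hx).trans (le_max_right _ _)) (norm_fst_le (u x, deriv u x))
        (norm_nonneg _) (zero_le_one.trans (le_max_left _ _))
  intro x hx
  exact congrArg Prod.fst <| eq_zero_of_abs_deriv_le_mul_abs_self_of_eq_zero_right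
    (fun x hx => (hpair x hx).continuousAt.continuousWithinAt)
    (fun x hx => (hpair x (Ico_subset_Icc_self hx)).hasDerivWithinAt)
    (Prod.ext hua hdua) (fun x hx => hbound x (Ico_subset_Icc_self hx)) x hx

end IsSchrodingerSolOn

section PruferAngle

/-- The right-hand side of the Prüfer equation `θ' = cos² θ - c sin² θ`, which the angle
`θ = arg (u' + i u)` of a nonzero solution of `u'' = c u` satisfies. A Prüfer angle on `[a, b]` is
an integral curve of this time-dependent field. -/
noncomputable def pruferField (c : ℝ → ℝ) (x y : ℝ) : ℝ :=
  Real.cos y ^ 2 - c x * Real.sin y ^ 2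

variable {c q θ : ℝ → ℝ} {a b x y l : ℝ}

theorem pruferField_of_sin_eq_zero (h : Real.sin y = 0) : pruferField c x y = 1 := by
  simp [pruferField, Real.cos_sq', h]

theorem lipschitzWith_pruferField (c : ℝ → ℝ) (x : ℝ) :
    LipschitzWith ‖1 + c x‖₊ (pruferField c x) := by
  refine LipschitzWith.of_dist_le_mul fun y z => ?_
  have hdouble : pruferField c x y - pruferField c x z
      = (1 + c x) * ((Real.cos (2 * y) - Real.cos (2 * z)) / 2) := by
    simp only [pruferField, Real.cos_two_mul, Real.sin_sq]
    ring
  have hcos : |(Real.cos (2 * y) - Real.cos (2 * z)) / 2| ≤ |y - z| := by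
    rw [abs_div, abs_two, div_le_iff₀ two_pos]
    calc |Real.cos (2 * y) - Real.cos (2 * z)| ≤ |2 * y - 2 * z| := Real.abs_cos_sub_cos_le _ _
      _ = |y - z| * 2 := by rw [← mul_sub, abs_mul, abs_two, mul_comm]
  rw [Real.dist_eq, Real.dist_eq, hdouble, abs_mul, coe_nnnorm, Real.norm_eq_abs]
  gcongr

theorem norm_pruferField_le (c : ℝ → ℝ) (x y : ℝ) :
    ‖pruferField c x y‖ ≤ 1 + ‖1 + c x‖ := by
  have hform : pruferField c x y = 1 - (1 + c x) * Real.sin y ^ 2 := by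
    rw [pruferField, Real.cos_sq']
    ring
  calc ‖pruferField c x y‖ ≤ ‖(1 : ℝ)‖ + ‖(1 + c x) * Real.sin y ^ 2‖ := hform ▸ norm_sub_le _ _
    _ = 1 + ‖1 + c x‖ * Real.sin y ^ 2 := by simp
    _ ≤ 1 + ‖1 + c x‖ := by
      gcongr
      exact mul_le_of_le_one_right (norm_nonneg _) (Real.sin_sq_le_one y)

theorem exists_nnnorm_one_add_le (hc : ContinuousOn c (Icc a b)) :
    ∃ K : ℝ≥0, ∀ t ∈ Icc a b, ‖1 + c t‖₊ ≤ K := by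
  obtain ⟨K, hK⟩ := isCompact_Icc.bddAbove_image (continuousOn_const.add hc).nnnorm
  exact ⟨K, fun t ht => hK (mem_image_of_mem _ ht)⟩

theorem exists_isIntegralCurveOn_pruferField (hab : a ≤ b) (hc : ContinuousOn c (Icc a b))
    (θ₀ : ℝ) : ∃ θ : ℝ → ℝ, θ a = θ₀ ∧ IsIntegralCurveOn θ (pruferField c) (Icc a b) := by
  obtain ⟨K, hK⟩ := exists_nnnorm_one_add_le hc
  refine exists_isIntegralCurveOn_Icc_of_bounded (K := K) (L := 1 + K) hab
    (fun t ht => (lipschitzWith_pruferField c t).weaken (hK t ht))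
    (fun y => continuousOn_const.sub (hc.mul continuousOn_const))
    (fun t ht y => (norm_pruferField_le c t y).trans ?_) θ₀
  push_cast
  gcongr
  exact hK t ht

theorem continuous_pruferAngle_param (hq : ContinuousOn q (Icc a b)) {θ : ℝ → ℝ → ℝ}
    (hθ : ∀ l, IsIntegralCurveOn (θ l) (pruferField fun x => q x + l) (Icc a b))
    (hθa : ∀ l m, θ l a = θ m a) (hx : x ∈ Icc a b) : Continuous fun l => θ l x := by
  refine continuous_iff_continuousAt.2 fun m => ?_
  obtain ⟨K, hK⟩ := exists_nnnorm_one_add_le (hq.add (continuousOn_const (c := m)))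
  have hfield : ∀ l t y,
      dist (pruferField (fun x => q x + l) t y) (pruferField (fun x => q x + m) t y)
        ≤ dist l m := fun l t y => by
    have hdiff : pruferField (fun x => q x + l) t y - pruferField (fun x => q x + m) t y
        = -((l - m) * Real.sin y ^ 2) := by
      simp only [pruferField]
      ring
    rw [Real.dist_eq, hdiff, abs_neg, abs_mul, abs_sq, Real.dist_eq]
    exact mul_le_of_le_one_right (abs_nonneg _) (Real.sin_sq_le_one y)
  have hgronwall : ∀ l, dist (θ l x) (θ m x) ≤ gronwallBound 0 K (dist l m + 0) (x - a) :=
    fun l => dist_le_of_approx_trajectories_ODE_of_mem (s := fun _ => univ)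
      (fun t ht => ((lipschitzWith_pruferField _ t).weaken
        (hK t (Ico_subset_Icc_self ht))).lipschitzOnWith)
      (hθ l).continuousOn (fun t ht => hasDerivWithinAt_Ici_of_isIntegralCurveOn_Icc (hθ l) ht)
      (fun t _ => hfield l t _) (fun _ _ => mem_univ _)
      (hθ m).continuousOn (fun t ht => hasDerivWithinAt_Ici_of_isIntegralCurveOn_Icc (hθ m) ht)
      (fun t _ => (dist_self _).le) (fun _ _ => mem_univ _)
      (by rw [hθa l m, dist_self]) x hx
  have hlim : Tendsto (fun l => gronwallBound 0 K (dist l m + 0) (x - a)) (𝓝 m) (𝓝 0) := by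
    have hcont : Continuous fun l => gronwallBound 0 K (dist l m + 0) (x - a) :=
      (gronwallBound_continuous_ε 0 K (x - a)).comp (by fun_prop)
    simpa [gronwallBound_ε0_δ0] using hcont.tendsto m
  exact tendsto_iff_dist_tendsto_zero.2 (squeeze_zero (fun _ => dist_nonneg) hgronwall hlim)

theorem le_pruferAngle_of_sin_eq_zero (hθ : IsIntegralCurveOn θ (pruferField c) (Icc a b))
    (hl : Real.sin l = 0) (hx : a ≤ x) (hlx : l ≤ θ x) : ∀ y ∈ Icc x b, l ≤ θ y := fun _ hy =>
  image_le_of_deriv_right_lt_deriv_boundary' continuousOn_const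
    (fun _ _ => hasDerivWithinAt_const _ _ _) hlx
    (hθ.continuousOn.mono (Icc_subset_Icc_left hx))
    (fun _ ht => hasDerivWithinAt_Ici_of_isIntegralCurveOn_Icc hθ (Ico_subset_Ico_left hx ht))
    (fun _ _ ht => by rw [← ht, pruferField_of_sin_eq_zero hl]; exact one_pos) hy

theorem pruferAngle_pos (hθ : IsIntegralCurveOn θ (pruferField c) (Icc a b)) (hθa : θ a = 0)
    (hx : x ∈ Ioc a b) : 0 < θ x := by
  have hx' : x ∈ Icc a b := Ioc_subset_Icc_self hx
  have hnonneg := le_pruferAngle_of_sin_eq_zero hθ Real.sin_zero le_rfl hθa.ge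
  refine (hnonneg x hx').lt_of_ne' fun hzero => ?_
  -- A zero would minimise `θ` on `[a, b]`, yet `θ` has slope `1` there.
  have hmin : IsLocalMinOn θ (Icc a b) x :=
    IsMinOn.localize fun t ht => hzero.trans_le (hnonneg t ht)
  have hslope : HasDerivWithinAt θ 1 (Icc a b) x :=
    (hθ x hx').congr_deriv (pruferField_of_sin_eq_zero (by rw [hzero, Real.sin_zero]))
  have hcone : a - x ∈ posTangentConeAt (Icc a b) x :=
    sub_mem_posTangentConeAt_of_segment_subset
      ((convex_Icc a b).segment_subset hx' (left_mem_Icc.2 (hx'.1.trans hx'.2)))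
  have hback : 0 ≤ a - x := by
    simpa using hmin.hasFDerivWithinAt_nonneg hslope.hasFDerivWithinAt hcone
  linarith [hx.1]

theorem pruferAngle_le_pi_div_two (hθ : IsIntegralCurveOn θ (pruferField c) (Icc a b))
    (hc : ∀ x ∈ Icc a b, 0 < c x) (hθa : θ a ≤ Real.pi / 2) :
    ∀ x ∈ Icc a b, θ x ≤ Real.pi / 2 := fun _ hx =>
  image_le_of_deriv_right_lt_deriv_boundary' hθ.continuousOn
    (fun _ ht => hasDerivWithinAt_Ici_of_isIntegralCurveOn_Icc hθ ht) hθa continuousOn_const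
    (fun _ _ => hasDerivWithinAt_const _ _ _)
    (fun t ht hπ => by simpa [pruferField, hπ] using hc t (Ico_subset_Icc_self ht)) hx

end PruferAngle

section PruferAmplitude

/-- The Prüfer amplitude `r` of a solution `u = r sin θ`, `u' = r cos θ` of `u'' = c u`,
normalised by `r a = 1`. It solves `r' = (1 + c) r sin θ cos θ`, which the exponential integrates
explicitly once the angle `θ` is known. -/
noncomputable def pruferAmplitude (c θ : ℝ → ℝ) (a x : ℝ) : ℝ :=
  Real.exp (∫ t in a..x, (1 + c t) * Real.sin (θ t) * Real.cos (θ t))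

variable {c θ u : ℝ → ℝ} {a b x : ℝ}

theorem pruferAmplitude_pos (c θ : ℝ → ℝ) (a x : ℝ) : 0 < pruferAmplitude c θ a x :=
  Real.exp_pos _

theorem pruferAmplitude_self (c θ : ℝ → ℝ) (a : ℝ) : pruferAmplitude c θ a a = 1 := by
  simp [pruferAmplitude]

theorem hasDerivWithinAt_pruferAmplitude (hc : ContinuousOn c (Icc a b))
    (hθ : ContinuousOn θ (Icc a b)) (hx : x ∈ Icc a b) :
    HasDerivWithinAt (pruferAmplitude c θ a)
      (pruferAmplitude c θ a x * ((1 + c x) * Real.sin (θ x) * Real.cos (θ x))) (Icc a b) x := by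
  have hcont : ContinuousOn (fun t => (1 + c t) * Real.sin (θ t) * Real.cos (θ t)) (Icc a b) := by
    fun_prop
  have : Fact (x ∈ Icc a b) := ⟨hx⟩
  exact (intervalIntegral.integral_hasDerivWithinAt_right
    ((hcont.mono (Icc_subset_Icc_right hx.2)).intervalIntegrable_of_Icc hx.1)
    (hcont.stronglyMeasurableAtFilter_nhdsWithin measurableSet_Icc x) (hcont x hx)).exp

theorem exists_isSchrodingerSolOn_eq_prufer (hab : a ≤ b) (hc : ContinuousOn c (Icc a b))
    (hθ : IsIntegralCurveOn θ (pruferField c) (Icc a b)) :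
    ∃ u : ℝ → ℝ, IsSchrodingerSolOn c u (Icc a b) ∧
      (∀ x ∈ Icc a b, u x = pruferAmplitude c θ a x * Real.sin (θ x)) ∧
      ∀ x ∈ Icc a b, deriv u x = pruferAmplitude c θ a x * Real.cos (θ x) := by
  set r := pruferAmplitude c θ a
  have hr : ∀ x ∈ Icc a b,
      HasDerivWithinAt r (r x * ((1 + c x) * Real.sin (θ x) * Real.cos (θ x))) (Icc a b) x :=
    fun x hx => hasDerivWithinAt_pruferAmplitude hc hθ.continuousOn hx
  have hsin : ∀ x ∈ Icc a b, HasDerivWithinAt (fun x => r x * Real.sin (θ x))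
      (r x * Real.cos (θ x)) (Icc a b) x := fun x hx => by
    refine ((hr x hx).mul (hθ x hx).sin).congr_deriv ?_
    rw [pruferField]
    linear_combination r x * Real.cos (θ x) * Real.sin_sq_add_cos_sq (θ x)
  have hcos : ∀ x ∈ Icc a b, HasDerivWithinAt (fun x => r x * Real.cos (θ x))
      (c x * (r x * Real.sin (θ x))) (Icc a b) x := fun x hx => by
    refine ((hr x hx).mul (hθ x hx).cos).congr_deriv ?_
    rw [pruferField]
    linear_combination c x * r x * Real.sin (θ x) * Real.sin_sq_add_cos_sq (θ x)
  obtain ⟨u, hu, husin, hucos, hode⟩ := exists_contDiff_two_eqOn_Icc hab hsin hcos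
    (hc.mul fun x hx => (hsin x hx).continuousWithinAt)
  exact ⟨u, ⟨hu, fun x hx => by rw [hode hx, husin hx]⟩, husin, hucos⟩

theorem IsSchrodingerSolOn.eq_deriv_mul_prufer (hu : IsSchrodingerSolOn c u (Icc a b))
    (hab : a ≤ b) (hc : ContinuousOn c (Icc a b)) (hua : u a = 0)
    (hθ : IsIntegralCurveOn θ (pruferField c) (Icc a b)) (hθa : θ a = 0) :
    ∀ x ∈ Icc a b, u x = deriv u a * (pruferAmplitude c θ a x * Real.sin (θ x)) := by
  obtain ⟨v, hv, hvsin, hvcos⟩ := exists_isSchrodingerSolOn_eq_prufer hab hc hθ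
  have ha : a ∈ Icc a b := left_mem_Icc.2 hab
  have hva : v a = 0 := by rw [hvsin a ha, hθa, Real.sin_zero, mul_zero]
  have hdva : deriv v a = 1 := by
    rw [hvcos a ha, hθa, Real.cos_zero, pruferAmplitude_self, mul_one]
  have hdiff : deriv (fun x => u x - deriv u a * v x) a = 0 := by
    rw [((hu.hasDerivAt a).fun_sub ((hv.hasDerivAt a).const_mul (deriv u a))).deriv, hdva, mul_one,
      sub_self]
  intro x hx
  rw [← hvsin x hx, ← sub_eq_zero]
  exact (hu.sub (hv.const_mul (deriv u a))).eq_zero_of_initial_eq_zero hc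
    (by simp [hua, hva]) hdiff x hx

end PruferAmplitude

namespace HasNegDirichletSpectrum

variable {q u v φ ψ : ℝ → ℝ} {a b : ℝ}

theorem comp_neg (h : HasNegDirichletSpectrum q a b) :
    HasNegDirichletSpectrum (fun x => q (-x)) (-b) (-a) := by
  rintro lam ψ hψ hψb hψa ⟨x, hx, hne⟩
  exact h lam (fun x => ψ (-x)) (by simpa using hψ.comp_neg) hψa hψb
    ⟨-x, ⟨le_neg_of_le_neg hx.2, neg_le_of_neg_le hx.1⟩, by simpa using hne⟩

theorem eqOn_of_boundary_eq (h : HasNegDirichletSpectrum q a b)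
    (hu : IsSchrodingerSolOn q u (Icc a b)) (hv : IsSchrodingerSolOn q v (Icc a b))
    (ha : u a = v a) (hb : u b = v b) : EqOn u v (Icc a b) := by
  intro x hx
  by_contra hne
  exact (h 0 (fun x => u x - v x) (by simpa using hu.sub hv) (sub_eq_zero.2 ha) (sub_eq_zero.2 hb)
    ⟨x, hx, sub_ne_zero.2 hne⟩).false

theorem pruferAngle_ne_pi (h : HasNegDirichletSpectrum q a b) (hab : a ≤ b)
    (hq : ContinuousOn q (Icc a b)) {l : ℝ} (hl : 0 ≤ l) {θ : ℝ → ℝ}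
    (hθ : IsIntegralCurveOn θ (pruferField fun x => q x + l) (Icc a b)) (hθa : θ a = 0) :
    θ b ≠ Real.pi := by
  intro hθb
  obtain ⟨u, hu, husin, -⟩ :=
    exists_isSchrodingerSolOn_eq_prufer hab (hq.add continuousOn_const) hθ
  obtain ⟨x, hx, hθx⟩ : ∃ x ∈ Icc a b, θ x = Real.pi / 2 :=
    intermediate_value_Icc hab hθ.continuousOn
      ⟨by rw [hθa]; positivity, by rw [hθb]; exact half_le_self Real.pi_pos.le⟩
  have hux : u x ≠ 0 := by
    rw [husin x hx, hθx, Real.sin_pi_div_two, mul_one]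
    exact (pruferAmplitude_pos _ _ _ _).ne'
  exact hl.not_gt <| h l u hu (by simp [husin a (left_mem_Icc.2 hab), hθa])
    (by simp [husin b (right_mem_Icc.2 hab), hθb]) ⟨x, hx, hux⟩

theorem exists_pruferAngle_lt_pi (h : HasNegDirichletSpectrum q a b) (hab : a ≤ b)
    (hq : ContinuousOn q (Icc a b)) :
    ∃ θ : ℝ → ℝ, IsIntegralCurveOn θ (pruferField q) (Icc a b) ∧ θ a = 0 ∧ θ b < Real.pi := by
  choose θ hθa hθ using fun l : ℝ =>
    exists_isIntegralCurveOn_pruferField (c := fun x => q x + l) hab (hq.add continuousOn_const) 0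
  refine ⟨θ 0, by simpa using hθ 0, hθa 0, lt_of_not_ge fun hπ => ?_⟩
  obtain ⟨C, hC⟩ := isCompact_Icc.exists_bound_of_continuousOn hq
  have hC₀ : 0 ≤ C := (norm_nonneg _).trans (hC a (left_mem_Icc.2 hab))
  have hb : b ∈ Icc a b := right_mem_Icc.2 hab
  have hlarge : θ (C + 1) b ≤ Real.pi := by
    refine (pruferAngle_le_pi_div_two (hθ (C + 1)) (fun x hx => ?_) ?_ b hb).trans
      (half_le_self Real.pi_pos.le)
    · linarith [(abs_le.1 (hC x hx)).1]
    · rw [hθa]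
      positivity
  have hcont : Continuous fun l => θ l b :=
    continuous_pruferAngle_param hq hθ (fun l m => by rw [hθa, hθa]) hb
  obtain ⟨l, hl, hlb⟩ := intermediate_value_Icc' (by positivity) hcont.continuousOn ⟨hlarge, hπ⟩
  exact h.pruferAngle_ne_pi hab hq hl.1 (hθ l) (hθa l) hlb

theorem ne_zero_of_left_eq_zero (h : HasNegDirichletSpectrum q a b)
    (hq : ContinuousOn q (Icc a b)) (hu : IsSchrodingerSolOn q u (Icc a b)) (hua : u a = 0)
    (hne : ∃ x ∈ Icc a b, u x ≠ 0) : ∀ x ∈ Ioc a b, u x ≠ 0 := by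
  intro x hx
  have hab : a ≤ b := hx.1.le.trans hx.2
  obtain ⟨θ, hθ, hθa, hθb⟩ := h.exists_pruferAngle_lt_pi hab hq
  have hprufer := hu.eq_deriv_mul_prufer hab hq hua hθ hθa
  have hdua : deriv u a ≠ 0 := fun hzero => by
    obtain ⟨y, hy, hney⟩ := hne
    exact hney (by rw [hprufer y hy, hzero, zero_mul])
  have hθx : θ x < Real.pi := by
    by_contra! hπ
    exact hθb.not_ge
      (le_pruferAngle_of_sin_eq_zero hθ Real.sin_pi hx.1.le hπ b (right_mem_Icc.2 hx.2))
  rw [hprufer x (Ioc_subset_Icc_self hx)]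
  exact mul_ne_zero hdua (mul_pos (pruferAmplitude_pos _ _ _ _)
    (Real.sin_pos_of_pos_of_lt_pi (pruferAngle_pos hθ hθa hx) hθx)).ne'

theorem ne_zero_of_right_eq_zero (h : HasNegDirichletSpectrum q a b)
    (hq : ContinuousOn q (Icc a b)) (hu : IsSchrodingerSolOn q u (Icc a b)) (hub : u b = 0)
    (hne : ∃ x ∈ Icc a b, u x ≠ 0) : ∀ x ∈ Ico a b, u x ≠ 0 := by
  have hneg : ∀ {x}, x ∈ Icc (-b) (-a) → -x ∈ Icc a b := fun hx =>
    ⟨le_neg_of_le_neg hx.2, neg_le_of_neg_le hx.1⟩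
  obtain ⟨y, hy, hney⟩ := hne
  intro x hx
  simpa using h.comp_neg.ne_zero_of_left_eq_zero
    (hq.comp continuous_neg.continuousOn fun _ => hneg) hu.comp_neg (by simpa using hub)
    ⟨-y, ⟨neg_le_neg hy.2, neg_le_neg hy.1⟩, by simpa using hney⟩
    (-x) ⟨neg_lt_neg hx.2, neg_le_neg hx.1⟩

theorem pos_of_boundary_pos (h : HasNegDirichletSpectrum q a b) (hab : a < b)
    (hφ : IsSchrodingerSolOn q φ (Icc a b)) (hφa : φ a = 0) (hφne : ∀ x ∈ Ioc a b, φ x ≠ 0)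
    (hψ : IsSchrodingerSolOn q ψ (Icc a b)) (hψb : ψ b = 0) (hψne : ∀ x ∈ Ico a b, ψ x ≠ 0)
    (hu : IsSchrodingerSolOn q u (Icc a b)) (hua : 0 < u a) (hub : 0 < u b) :
    ∀ x ∈ Icc a b, 0 < u x := by
  have hψa : ψ a ≠ 0 := hψne a (left_mem_Ico.2 hab)
  have hφb : φ b ≠ 0 := hφne b (right_mem_Ioc.2 hab)
  have hcomb := h.eqOn_of_boundary_eq (hu.sub (hφ.const_mul (u b / φ b)))
    (hψ.const_mul (u a / ψ a)) (by simp [hφa, hψa]) (by simp [hψb, hφb])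
  have hφpos : ∀ x ∈ Ioc a b, 0 < φ x / φ b := fun x hx =>
    div_pos_of_isPreconnected_of_forall_ne_zero isPreconnected_Ioc
      hφ.contDiff.continuous.continuousOn hφne hx (right_mem_Ioc.2 hab)
  have hψpos : ∀ x ∈ Ico a b, 0 < ψ x / ψ a := fun x hx =>
    div_pos_of_isPreconnected_of_forall_ne_zero isPreconnected_Ico
      hψ.contDiff.continuous.continuousOn hψne hx (left_mem_Ico.2 hab)
  intro x hx
  rcases hx.1.eq_or_lt with rfl | hax
  · exact hua
  rcases hx.2.eq_or_lt with rfl | hxb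
  · exact hub
  calc 0 < u b * (φ x / φ b) + u a * (ψ x / ψ a) :=
        add_pos (mul_pos hub (hφpos x ⟨hax, hx.2⟩)) (mul_pos hua (hψpos x ⟨hx.1, hxb⟩))
    _ = u x := by linear_combination -hcomb hx

end HasNegDirichletSpectrum

/-- If the Dirichlet spectrum of D² - q on [-M,M] is strictly negative,
then nonzero solutions φ₀, ψ₀ of ψ'' = qψ vanishing at -M resp. M have no zeros in
(-M,M), are linearly independent, and the solution of the Dirichlet problem
ψ'' = qψ, ψ(±M) = 1 is unique and strictly positive on [-M,M]. -/
theorem dirichlet_positive_solution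
    (M : ℝ) (hM : 0 < M) (q : ℝ → ℝ) (hq : ContinuousOn q (Set.Icc (-M) M))
    (hspec : ∀ lam : ℝ, ∀ ψ : ℝ → ℝ, ContDiff ℝ 2 ψ →
      (∀ x ∈ Set.Icc (-M) M, deriv (deriv ψ) x - q x * ψ x = lam * ψ x) →
      ψ (-M) = 0 → ψ M = 0 → (∃ x ∈ Set.Icc (-M) M, ψ x ≠ 0) → lam < 0)
    (φ₀ ψ₀ : ℝ → ℝ) (hφ₀ : ContDiff ℝ 2 φ₀) (hψ₀ : ContDiff ℝ 2 ψ₀)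
    (hφ₀ode : ∀ x ∈ Set.Icc (-M) M, deriv (deriv φ₀) x = q x * φ₀ x)
    (hψ₀ode : ∀ x ∈ Set.Icc (-M) M, deriv (deriv ψ₀) x = q x * ψ₀ x)
    (hφ₀bc : φ₀ (-M) = 0) (hψ₀bc : ψ₀ M = 0)
    (hφ₀ne : ∃ x ∈ Set.Icc (-M) M, φ₀ x ≠ 0)
    (hψ₀ne : ∃ x ∈ Set.Icc (-M) M, ψ₀ x ≠ 0) :
    (∀ x ∈ Set.Ioo (-M) M, φ₀ x ≠ 0 ∧ ψ₀ x ≠ 0) ∧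
    (∀ c d : ℝ, (∀ x ∈ Set.Icc (-M) M, c * φ₀ x + d * ψ₀ x = 0) → c = 0 ∧ d = 0) ∧
    (∀ ψ₁ ψ₂ : ℝ → ℝ, ContDiff ℝ 2 ψ₁ → ContDiff ℝ 2 ψ₂ →
      (∀ x ∈ Set.Icc (-M) M, deriv (deriv ψ₁) x = q x * ψ₁ x) →
      (∀ x ∈ Set.Icc (-M) M, deriv (deriv ψ₂) x = q x * ψ₂ x) →
      ψ₁ (-M) = 1 → ψ₁ M = 1 → ψ₂ (-M) = 1 → ψ₂ M = 1 →
      ∀ x ∈ Set.Icc (-M) M, ψ₁ x = ψ₂ x) ∧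
    (∀ ψ : ℝ → ℝ, ContDiff ℝ 2 ψ →
      (∀ x ∈ Set.Icc (-M) M, deriv (deriv ψ) x = q x * ψ x) →
      ψ (-M) = 1 → ψ M = 1 → ∀ x ∈ Set.Icc (-M) M, 0 < ψ x) := by
  have hab : -M < M := neg_lt_self hM
  have h : HasNegDirichletSpectrum q (-M) M := fun lam ψ hψ =>
    hspec lam ψ hψ.contDiff fun x hx => by rw [hψ.deriv_deriv x hx]; ring
  have hφ : IsSchrodingerSolOn q φ₀ (Icc (-M) M) := ⟨hφ₀, hφ₀ode⟩
  have hψ : IsSchrodingerSolOn q ψ₀ (Icc (-M) M) := ⟨hψ₀, hψ₀ode⟩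
  have hφne := h.ne_zero_of_left_eq_zero hq hφ hφ₀bc hφ₀ne
  have hψne := h.ne_zero_of_right_eq_zero hq hψ hψ₀bc hψ₀ne
  refine ⟨fun x hx => ⟨hφne x (Ioo_subset_Ioc_self hx), hψne x (Ioo_subset_Ico_self hx)⟩,
    fun c d hcd => ⟨?_, ?_⟩, fun ψ₁ ψ₂ h₁ h₂ ode₁ ode₂ h₁l h₁r h₂l h₂r => ?_,
    fun ψ hψc hode hl hr => ?_⟩
  · simpa [hψ₀bc, hφne M (right_mem_Ioc.2 hab)] using hcd M (right_mem_Icc.2 hab.le)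
  · simpa [hφ₀bc, hψne (-M) (left_mem_Ico.2 hab)] using hcd (-M) (left_mem_Icc.2 hab.le)
  · exact h.eqOn_of_boundary_eq ⟨h₁, ode₁⟩ ⟨h₂, ode₂⟩ (h₁l.trans h₂l.symm) (h₁r.trans h₂r.symm)
  · exact h.pos_of_boundary_pos hab hφ hφ₀bc hφne hψ hψ₀bc hψne ⟨hψc, hode⟩
      (hl ▸ one_pos) (hr ▸ one_pos)
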